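/- (Theorem 1.1) Let M be a compact connected metric measure space with μ(M)=1 and diam M=1 satisfying Conditions A and B, and suppose that for all sufficiently large m there exist partitions of M into m sets of measure 1/m and diameter at most c₈ m^{−1/d}. Then there is a constant c₃ > 0 such that for every N ≥ 1, every 0 < p < ∞, and every Borel probability measure ξ on [0,1], there exists an N-point set D_N ⊂ M with L_p-discrepancy L_p[ξ, D_N] = (∫_M ∫_0^1 |L[B(y,r), D_N]|^p dμ(y) dξ(r))^{1/p} ≤ c₃ (p+1)^{1/2} N^{1/2 − 1/(2d)}. -/

import Mathlib

open MeasureTheory Metric Set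

/-- The volume of the metric ball, with the convention `v(y,r) = 1` for `r ≥ 1`. -/
noncomputable def vol {M : Type*} [MetricSpace M] [MeasurableSpace M]
    (μ : MeasureTheory.Measure M) (y : M) (r : ℝ) : ℝ :=
  if 1 ≤ r then 1 else (μ (Metric.ball y r)).toReal

/-! Jittered sampling: put one random point in each cell of a partition into `N` cells of equal
measure. The cells inside or outside a ball `B(y, r)` contribute nothing random to the local
discrepancy, so it is a sum of independent centred indicators over the cells that meet both the
ball and its complement. Those lie in an annulus of width twice the cell diameter, so Condition B
leaves only `O(N^{1 - 1/d})` of them. By Hoeffding's lemma the local discrepancy is then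
sub-Gaussian with variance proxy `O(N^{1 - 1/d})`, which bounds its `p`-th moments uniformly in
`(y, r)`; averaging over `(y, r)` and exchanging the integrals, some sample is as good as the
mean. -/

section Moments

open ProbabilityTheory
open scoped NNReal

variable {Ω : Type*} {mΩ : MeasurableSpace Ω} {P : Measure Ω} {X : Ω → ℝ} {c : ℝ≥0} {p q t : ℝ}

lemma integral_abs_rpow_le_rpow_integral_abs_rpow [IsProbabilityMeasure P] (hp : 0 < p)
    (hpq : p ≤ q) (hX : MemLp X (ENNReal.ofReal q) P) :
    ∫ ω, |X ω| ^ p ∂P ≤ (∫ ω, |X ω| ^ q ∂P) ^ (p / q) := by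
  have hq : 0 < q := hp.trans_le hpq
  have integrable_rpow {s : ℝ} (hs : 0 < s) (hsq : s ≤ q) :
      Integrable (fun ω => |X ω| ^ s) P := by
    simpa [ENNReal.toReal_ofReal hs.le] using
      (hX.mono_exponent (ENNReal.ofReal_le_ofReal hsq)).integrable_norm_rpow
        (by simpa using hs) ENNReal.ofReal_ne_top
  have hpow (ω : Ω) : (|X ω| ^ q) ^ (p / q) = |X ω| ^ p := by
    rw [← Real.rpow_mul (abs_nonneg _), mul_div_cancel₀ _ hq.ne']
  have jensen := (Real.concaveOn_rpow (by positivity) ((div_le_one hq).2 hpq)).le_map_integral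
    (Real.continuous_rpow_const (by positivity)).continuousOn isClosed_Ici
    (ae_of_all P fun ω => mem_Ici.2 (by positivity)) (integrable_rpow hq le_rfl)
    (by simpa only [Function.comp_def, hpow] using integrable_rpow hp hpq)
  simpa only [hpow] using jensen

lemma integral_abs_rpow_le_mul_mgf_add_mgf (hp : 0 ≤ p) (ht : 0 < t)
    (hpos : Integrable (fun ω => Real.exp (t * X ω)) P)
    (hneg : Integrable (fun ω => Real.exp (-t * X ω)) P) :
    ∫ ω, |X ω| ^ p ∂P ≤ (p / t) ^ p * (mgf X P t + mgf X P (-t)) := by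
  simp only [mgf]
  rw [← integral_add hpos hneg, ← integral_const_mul]
  refine integral_mono_of_nonneg (ae_of_all _ fun ω => by positivity)
    ((hpos.add hneg).const_mul _) (ae_of_all _ fun ω => ?_)
  calc |X ω| ^ p ≤ (p / t) ^ p * max (Real.exp (t * X ω)) (Real.exp (-t * X ω)) :=
        rpow_abs_le_mul_max_exp_of_pos _ hp ht
    _ ≤ (p / t) ^ p * (Real.exp (t * X ω) + Real.exp (-t * X ω)) := by
        gcongr
        exact max_le_add_of_nonneg (Real.exp_pos _).le (Real.exp_pos _).le

lemma integral_abs_rpow_le_of_hasSubgaussianMGF_of_one_le (hX : HasSubgaussianMGF X c P)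
    (hp : 1 ≤ p) : ∫ ω, |X ω| ^ p ∂P ≤ (2 * Real.exp (1 / 2) * √(p * c)) ^ p := by
  have hp0 : 0 < p := by linarith
  rcases eq_zero_or_pos c with rfl | hc
  · have hX0 : ∀ᵐ ω ∂P, |X ω| ^ p = 0 := by
      filter_upwards [hX.ae_eq_zero_of_hasSubgaussianMGF_zero] with ω hω
      simp [hω, hp0.ne']
    rw [integral_eq_zero_of_ae hX0]
    positivity
  -- `t = √(p / c)` minimises `(p / t) ^ p * exp (c * t ^ 2 / 2)`.
  set t := √(p / c)
  have ht : 0 < t := by positivity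
  have ht_sq : c * t ^ 2 / 2 = 1 / 2 * p := by
    rw [Real.sq_sqrt (by positivity)]
    field_simp
  have hpt : p / t = √(p * c) := by
    rw [div_eq_iff ht.ne', ← Real.sqrt_mul (by positivity),
      show p * c * (p / c) = p ^ 2 by field_simp, Real.sqrt_sq hp0.le]
  calc ∫ ω, |X ω| ^ p ∂P ≤ (p / t) ^ p * (mgf X P t + mgf X P (-t)) :=
        integral_abs_rpow_le_mul_mgf_add_mgf hp0.le ht (hX.integrable_exp_mul t)
          (hX.integrable_exp_mul (-t))
    _ ≤ (p / t) ^ p * (Real.exp (c * t ^ 2 / 2) + Real.exp (c * (-t) ^ 2 / 2)) := by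
        gcongr
        exacts [hX.mgf_le t, hX.mgf_le (-t)]
    _ = 2 * Real.exp (1 / 2 * p) * √(p * c) ^ p := by
        rw [neg_sq, ht_sq, hpt]
        ring
    _ ≤ 2 ^ p * Real.exp (1 / 2 * p) * √(p * c) ^ p := by
        gcongr
        exact Real.self_le_rpow_of_one_le one_le_two hp
    _ = (2 * Real.exp (1 / 2) * √(p * c)) ^ p := by
        rw [Real.exp_mul, ← Real.mul_rpow (by positivity) (by positivity),
          ← Real.mul_rpow (by positivity) (by positivity)]

-- The exponent is raised to `p + 1 ≥ 1` first: the factor `2 ^ (1 / p)` that the exponential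
-- bound gives directly is unbounded as `p → 0`.
lemma integral_abs_rpow_le_of_hasSubgaussianMGF [IsProbabilityMeasure P]
    (hX : HasSubgaussianMGF X c P) (hp : 0 < p) :
    ∫ ω, |X ω| ^ p ∂P ≤ (2 * Real.exp (1 / 2) * √((p + 1) * c)) ^ p := by
  calc ∫ ω, |X ω| ^ p ∂P ≤ (∫ ω, |X ω| ^ (p + 1) ∂P) ^ (p / (p + 1)) :=
        integral_abs_rpow_le_rpow_integral_abs_rpow hp (by linarith) (hX.memLp (p + 1).toNNReal)
    _ ≤ ((2 * Real.exp (1 / 2) * √((p + 1) * c)) ^ (p + 1)) ^ (p / (p + 1)) := by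
        gcongr
        exact integral_abs_rpow_le_of_hasSubgaussianMGF_of_one_le hX (by linarith)
    _ = (2 * Real.exp (1 / 2) * √((p + 1) * c)) ^ p := by
        rw [← Real.rpow_mul (by positivity), mul_div_cancel₀ _ (by positivity)]

lemma hasSubgaussianMGF_indicator_sub_measureReal [IsProbabilityMeasure P] {B : Set Ω}
    (hB : MeasurableSet B) :
    HasSubgaussianMGF (fun ω => B.indicator 1 ω - P.real B) (1 / 4) P := by
  have hoeffding := hasSubgaussianMGF_of_mem_Icc (μ := P) (a := 0) (b := 1)
    (measurable_one.indicator hB).aemeasurable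
    (ae_of_all _ fun ω => ⟨indicator_nonneg (fun _ _ => zero_le_one) ω,
      indicator_le_self' (fun _ _ => zero_le_one) ω⟩)
  rw [integral_indicator_one hB] at hoeffding
  convert hoeffding using 1
  norm_num

lemma hasSubgaussianMGF_sum_pi {ι : Type*} [Fintype ι] {α : ι → Type*}
    {mα : ∀ i, MeasurableSpace (α i)} {ν : ∀ i, Measure (α i)} [∀ i, IsProbabilityMeasure (ν i)]
    {X : ∀ i, α i → ℝ} {c : ι → ℝ≥0} (hX : ∀ i, HasSubgaussianMGF (X i) (c i) (ν i)) :
    HasSubgaussianMGF (fun ω => ∑ i, X i (ω i)) (∑ i, c i) (Measure.pi ν) := by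
  have hcoord (i : ι) : HasSubgaussianMGF (fun ω : ∀ i, α i => X i (ω i)) (c i) (Measure.pi ν) :=
    .of_map (measurable_pi_apply i).aemeasurable
      ((measurePreserving_eval ν i).map_eq.symm ▸ hX i)
  exact HasSubgaussianMGF.sum_of_iIndepFun (iIndepFun_pi fun i => (hX i).aemeasurable)
    fun i _ => hcoord i

lemma exists_integral_le_of_forall_integral_le {Z : Type*} {mZ : MeasurableSpace Z}
    {ρ : Measure Z} [IsProbabilityMeasure P] [IsProbabilityMeasure ρ] {F : Ω → Z → ℝ} {C : ℝ}
    (hF : Integrable (Function.uncurry F) (P.prod ρ)) (hC : ∀ z, ∫ ω, F ω z ∂P ≤ C) :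
    ∃ ω, ∫ z, F ω z ∂ρ ≤ C := by
  obtain ⟨ω, hω⟩ := exists_le_integral hF.integral_prod_left
  refine ⟨ω, hω.trans ?_⟩
  calc ∫ ω, ∫ z, F ω z ∂ρ ∂P = ∫ z, ∫ ω, F ω z ∂P ∂ρ := integral_integral_swap hF
    _ ≤ ∫ _, C ∂ρ := integral_mono hF.integral_prod_right (integrable_const C) hC
    _ = C := by simp

end Moments

section LocalDiscrepancy

variable {M : Type*} [MeasurableSpace M] {μ : Measure M} {N : ℕ}

/-- The local discrepancy `L[B, D_N] = #(B ∩ D_N) - N μ(B)` of the point set `D_N`, which is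
encoded as a family `D : Fin N → M`, so that points are counted with multiplicity. -/
noncomputable def localDiscrepancy (μ : Measure M) (B : Set M) (D : Fin N → M) : ℝ :=
  ∑ i, B.indicator 1 (D i) - N * μ.real B

lemma abs_localDiscrepancy_le [IsProbabilityMeasure μ] (B : Set M) (D : Fin N → M) :
    |localDiscrepancy μ B D| ≤ N := by
  have hcount_nonneg : 0 ≤ ∑ i, B.indicator (1 : M → ℝ) (D i) :=
    Finset.sum_nonneg fun i _ => indicator_nonneg (fun _ _ => zero_le_one) _
  have hcount_le : ∑ i, B.indicator (1 : M → ℝ) (D i) ≤ N := by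
    simpa using Finset.sum_le_card_nsmul Finset.univ (fun i => B.indicator (1 : M → ℝ) (D i)) 1
      fun i _ => indicator_le_self' (fun _ _ => zero_le_one) _
  have hmean_le : N * μ.real B ≤ N := mul_le_of_le_one_right N.cast_nonneg measureReal_le_one
  exact abs_sub_le_of_nonneg_of_le hcount_nonneg hcount_le (by positivity) hmean_le

lemma norm_abs_localDiscrepancy_rpow_le [IsProbabilityMeasure μ] {p : ℝ} (hp : 0 ≤ p)
    (B : Set M) (D : Fin N → M) :
    ‖|localDiscrepancy μ B D| ^ p‖ ≤ (N : ℝ) ^ p := by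
  rw [Real.norm_of_nonneg (by positivity)]
  gcongr
  exact abs_localDiscrepancy_le B D

end LocalDiscrepancy

section Stratified

open ProbabilityTheory

variable {M : Type*} [MeasurableSpace M] {μ : Measure M} {N : ℕ}

/-- A partition of a probability space into `N` measurable cells of measure `1 / N`: the strata
of jittered sampling. -/
structure IsEqualMeasurePartition (μ : Measure M) (P : Fin N → Set M) : Prop where
  measurableSet : ∀ j, MeasurableSet (P j)
  pairwise_disjoint : Pairwise (Function.onFun Disjoint P)
  iUnion_eq_univ : ⋃ j, P j = univ
  measure_eq : ∀ j, μ (P j) = 1 / N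

open scoped Classical in
/-- The indices of the cells that meet both `B` and its complement: the only cells in which a
random point contributes to the fluctuation of the number of points in `B`. -/
noncomputable def crossingCells {ι α : Type*} [Fintype ι] (P : ι → Set α) (B : Set α) : Finset ι :=
  {j | ¬ P j ⊆ B ∧ ¬ Disjoint (P j) B}

/-- The law of a jittered sample: independent points, the `j`-th one distributed in the cell `P j`
according to the normalised restriction of `μ`. -/
noncomputable def jitteredMeasure (μ : Measure M) (P : Fin N → Set M) : Measure (Fin N → M) :=
  Measure.pi fun j => μ[|P j]

lemma indicator_ae_eq_measureReal_cond [IsFiniteMeasure μ] {A B : Set M} (hA : MeasurableSet A)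
    (hμA : μ A ≠ 0) (h : A ⊆ B ∨ Disjoint A B) :
    ∀ᵐ x ∂μ[|A], B.indicator 1 x = μ[|A].real B := by
  have := cond_isProbabilityMeasure hμA
  rcases h with hAB | hAB
  · have hB : ∀ᵐ x ∂μ[|A], x ∈ B := (ae_cond_mem hA).mono fun x hx => hAB hx
    have hB_one : μ[|A].real B = 1 :=
      (measureReal_congr (Filter.eventuallyEq_univ.2 hB)).trans probReal_univ
    filter_upwards [hB] with x hx
    simp [hx, hB_one]
  · have hB : ∀ᵐ x ∂μ[|A], x ∉ B := (ae_cond_mem hA).mono fun x hx => hAB.notMem_of_mem_left hx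
    have hB_zero : μ[|A].real B = 0 :=
      (measureReal_congr (Filter.eventuallyEq_empty.2 hB)).trans measureReal_empty
    filter_upwards [hB] with x hx
    simp [hx, hB_zero]

namespace IsEqualMeasurePartition

variable {P : Fin N → Set M} {B : Set M}

lemma measure_ne_zero (hP : IsEqualMeasurePartition μ P) (j : Fin N) : μ (P j) ≠ 0 := by
  simp [hP.measure_eq]

lemma isProbabilityMeasure_jitteredMeasure [IsFiniteMeasure μ] (hP : IsEqualMeasurePartition μ P) :
    IsProbabilityMeasure (jitteredMeasure μ P) := by
  have (j : Fin N) : IsProbabilityMeasure μ[|P j] :=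
    cond_isProbabilityMeasure (hP.measure_ne_zero j)
  exact Measure.pi.instIsProbabilityMeasure _

lemma sum_measureReal_cond [IsFiniteMeasure μ] (hP : IsEqualMeasurePartition μ P)
    (hB : MeasurableSet B) : ∑ j, μ[|P j].real B = N * μ.real B := by
  have hcond (j : Fin N) : μ[|P j].real B = N * μ.real (P j ∩ B) := by
    simp [measureReal_def, cond_apply (hP.measurableSet j), hP.measure_eq]
  have hdisj : Pairwise (Function.onFun Disjoint fun j => P j ∩ B) := fun i j hij =>
    (hP.pairwise_disjoint hij).mono inter_subset_left inter_subset_left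
  calc ∑ j, μ[|P j].real B = N * ∑ j, μ.real (P j ∩ B) := by
        simp_rw [hcond, Finset.mul_sum]
    _ = N * μ.real (⋃ j, P j ∩ B) := by
        rw [measureReal_iUnion_fintype hdisj fun j => (hP.measurableSet j).inter hB]
    _ = N * μ.real B := by rw [← iUnion_inter, hP.iUnion_eq_univ, univ_inter]

lemma card_eq_mul_measureReal_biUnion [IsFiniteMeasure μ]
    (hP : IsEqualMeasurePartition μ P) (s : Finset (Fin N)) :
    (s.card : ℝ) = N * μ.real (⋃ j ∈ s, P j) := by
  rcases s.eq_empty_or_nonempty with rfl | ⟨j, -⟩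
  · simp
  have hN : (N : ℝ) ≠ 0 := Nat.cast_ne_zero.2 j.pos.ne'
  have hcell (j : Fin N) : μ.real (P j) = 1 / N := by simp [measureReal_def, hP.measure_eq]
  rw [measureReal_biUnion_finset (fun i _ j _ hij => hP.pairwise_disjoint hij)
    fun j _ => hP.measurableSet j, Finset.sum_congr rfl fun j _ => hcell j, Finset.sum_const,
    nsmul_eq_mul]
  field_simp

lemma hasSubgaussianMGF_localDiscrepancy [IsFiniteMeasure μ] (hP : IsEqualMeasurePartition μ P)
    (hB : MeasurableSet B) :
    HasSubgaussianMGF (localDiscrepancy μ B) ((crossingCells P B).card / 4)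
      (jitteredMeasure μ P) := by
  classical
  have (j : Fin N) : IsProbabilityMeasure μ[|P j] :=
    cond_isProbabilityMeasure (hP.measure_ne_zero j)
  have hcell (j : Fin N) : HasSubgaussianMGF (fun x => B.indicator 1 x - μ[|P j].real B)
      (if j ∈ crossingCells P B then 1 / 4 else 0) μ[|P j] := by
    split_ifs with hj
    · exact hasSubgaussianMGF_indicator_sub_measureReal hB
    · have hconst := indicator_ae_eq_measureReal_cond (hP.measurableSet j) (hP.measure_ne_zero j)
        (by simpa [crossingCells, ← or_iff_not_imp_left] using hj)
      exact HasSubgaussianMGF.fun_zero.congr (hconst.mono fun x hx => (sub_eq_zero.2 hx).symm)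
  convert hasSubgaussianMGF_sum_pi hcell using 1
  · ext ω
    rw [Finset.sum_sub_distrib, hP.sum_measureReal_cond hB, localDiscrepancy]
  · rw [Finset.sum_ite_mem, Finset.univ_inter, Finset.sum_const, nsmul_eq_mul, mul_one_div]
  · rfl

end IsEqualMeasurePartition

end Stratified

section LpDiscrepancy

variable {M : Type*} [PseudoMetricSpace M] [MeasurableSpace M] {μ : Measure M} {ξ : Measure ℝ}
  {N : ℕ} {p : ℝ}

/-- The `L_p`-discrepancy `L_p[ξ, D_N]` with respect to the balls of radii distributed by `ξ`. -/
noncomputable def lpDiscrepancy (μ : Measure M) (ξ : Measure ℝ) (p : ℝ) (D : Fin N → M) : ℝ :=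
  (∫ y, ∫ r, |localDiscrepancy μ (ball y r) D| ^ p ∂ξ ∂μ) ^ (1 / p)

lemma lpDiscrepancy_le_of_integral_le {D : Fin N → M} {A : ℝ} (hp : 0 < p) (hA : 0 ≤ A)
    (h : ∫ y, ∫ r, |localDiscrepancy μ (ball y r) D| ^ p ∂ξ ∂μ ≤ A ^ p) :
    lpDiscrepancy μ ξ p D ≤ A := by
  rw [lpDiscrepancy, one_div]
  exact (Real.rpow_inv_le_iff_of_pos (by positivity) hA hp).2 h

variable [IsProbabilityMeasure μ]

lemma lpDiscrepancy_le_natCast [IsProbabilityMeasure ξ] (hp : 0 < p) (D : Fin N → M) :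
    lpDiscrepancy μ ξ p D ≤ N := by
  refine lpDiscrepancy_le_of_integral_le hp N.cast_nonneg ((Real.le_norm_self _).trans ?_)
  have hinner (y : M) : ‖∫ r, |localDiscrepancy μ (ball y r) D| ^ p ∂ξ‖ ≤ (N : ℝ) ^ p := by
    simpa using norm_integral_le_of_norm_le_const
      (ae_of_all ξ fun r => norm_abs_localDiscrepancy_rpow_le hp.le (ball y r) D)
  simpa using norm_integral_le_of_norm_le_const (ae_of_all μ hinner)

variable [OpensMeasurableSpace M] [SecondCountableTopology M]

lemma measurable_localDiscrepancy_ball :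
    Measurable fun q : (Fin N → M) × M × ℝ => localDiscrepancy μ (ball q.2.1 q.2.2) q.1 := by
  have hindicator (i : Fin N) : Measurable fun q : (Fin N → M) × M × ℝ =>
      (ball q.2.1 q.2.2).indicator (1 : M → ℝ) (q.1 i) :=
    measurable_one.indicator
      (measurableSet_lt (by fun_prop) (by fun_prop) :
        MeasurableSet {q : (Fin N → M) × M × ℝ | dist (q.1 i) q.2.1 < q.2.2})
  have hmeasure : Measurable fun z : M × ℝ => μ.real (ball z.1 z.2) :=
    (measurable_measure_prodMk_left (ν := μ)
      (measurableSet_lt (by fun_prop) (by fun_prop) :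
        MeasurableSet {q : (M × ℝ) × M | dist q.2 q.1.1 < q.1.2})).ennreal_toReal
  exact (Finset.measurable_sum _ fun i _ => hindicator i).sub
    ((hmeasure.comp measurable_snd).const_mul _)

lemma integrable_abs_localDiscrepancy_ball_rpow {Q : Measure ((Fin N → M) × M × ℝ)}
    [IsFiniteMeasure Q] (hp : 0 ≤ p) :
    Integrable (fun q => |localDiscrepancy μ (ball q.2.1 q.2.2) q.1| ^ p) Q :=
  .of_bound (measurable_localDiscrepancy_ball.abs.pow_const p).aestronglyMeasurable _
    (ae_of_all _ fun q => norm_abs_localDiscrepancy_rpow_le hp (ball q.2.1 q.2.2) q.1)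

lemma exists_lpDiscrepancy_le_of_forall_integral_le [IsProbabilityMeasure ξ]
    {Q : Measure (Fin N → M)} [IsProbabilityMeasure Q] {A : ℝ} (hp : 0 < p) (hA : 0 ≤ A)
    (hQ : ∀ y r, ∫ D, |localDiscrepancy μ (ball y r) D| ^ p ∂Q ≤ A ^ p) :
    ∃ D : Fin N → M, lpDiscrepancy μ ξ p D ≤ A := by
  obtain ⟨D, hD⟩ := exists_integral_le_of_forall_integral_le (P := Q) (ρ := μ.prod ξ)
    (F := fun D z => |localDiscrepancy μ (ball z.1 z.2) D| ^ p)
    (integrable_abs_localDiscrepancy_ball_rpow hp.le) fun z => hQ z.1 z.2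
  refine ⟨D, lpDiscrepancy_le_of_integral_le hp hA ?_⟩
  have hsection : Integrable (fun z : M × ℝ => |localDiscrepancy μ (ball z.1 z.2) D| ^ p)
      (μ.prod ξ) :=
    .of_bound ((measurable_localDiscrepancy_ball.comp
        measurable_prodMk_left).abs.pow_const p).aestronglyMeasurable _
      (ae_of_all _ fun z => norm_abs_localDiscrepancy_rpow_le hp.le (ball z.1 z.2) D)
  rwa [integral_prod _ hsection] at hD

lemma IsEqualMeasurePartition.exists_lpDiscrepancy_le [IsProbabilityMeasure ξ]
    {P : Fin N → Set M} (hP : IsEqualMeasurePartition μ P) {k : ℝ}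
    (hk : ∀ y r, ((crossingCells P (ball y r)).card : ℝ) ≤ k) (hp : 0 < p) :
    ∃ D : Fin N → M, lpDiscrepancy μ ξ p D ≤ Real.exp (1 / 2) * √((p + 1) * k) := by
  have := hP.isProbabilityMeasure_jitteredMeasure
  refine exists_lpDiscrepancy_le_of_forall_integral_le (Q := jitteredMeasure μ P) hp
    (by positivity) fun y r => ?_
  refine (integral_abs_rpow_le_of_hasSubgaussianMGF
    (hP.hasSubgaussianMGF_localDiscrepancy measurableSet_ball) hp).trans ?_
  push_cast
  set m : ℝ := ((crossingCells P (ball y r)).card : ℝ)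
  calc (2 * Real.exp (1 / 2) * √((p + 1) * (m / 4))) ^ p
      = (Real.exp (1 / 2) * √((p + 1) * m)) ^ p := by
        rw [show (p + 1) * (m / 4) = (p + 1) * m / 2 ^ 2 by ring,
          Real.sqrt_div' _ (by norm_num), Real.sqrt_sq zero_le_two]
        ring_nf
    _ ≤ (Real.exp (1 / 2) * √((p + 1) * k)) ^ p := by
        gcongr
        exact hk y r

end LpDiscrepancy

section Lipschitz

open scoped NNReal

variable {M : Type*} [PseudoMetricSpace M]

lemma iUnion_crossingCells_ball_subset [BoundedSpace M] {ι : Type*} [Fintype ι]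
    {P : ι → Set M} {δ : ℝ} (hδ : ∀ j, diam (P j) ≤ δ) (y : M) (r : ℝ) :
    ⋃ j ∈ crossingCells P (ball y r), P j ⊆ ball y (r + δ) \ ball y (r - δ) := by
  refine iUnion₂_subset fun j hj z hz => ?_
  have hdist {x : M} (hx : x ∈ P j) : dist z x ≤ δ :=
    (dist_le_diam_of_mem (Bornology.IsBounded.all (P j)) hz hx).trans (hδ j)
  simp only [crossingCells, Finset.mem_filter_univ, not_subset, not_disjoint_iff] at hj
  obtain ⟨⟨x_out, hx_out, hx_out_ball⟩, x_in, hx_in, hx_in_ball⟩ := hj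
  rw [mem_ball] at hx_out_ball hx_in_ball
  rw [mem_sdiff, mem_ball, mem_ball]
  constructor
  · linarith [dist_triangle z x_in y, hdist hx_in]
  · linarith [dist_triangle_left x_out y z, hdist hx_out]

variable [MeasurableSpace M] [OpensMeasurableSpace M] {μ : Measure M} {N : ℕ} {P : Fin N → Set M}
  {c₂ : ℝ≥0}

lemma measureReal_ball_sdiff_ball_le [IsFiniteMeasure μ] {y : M}
    (hμ : LipschitzWith c₂ fun r => μ.real (ball y r)) {r₁ r₂ : ℝ} (hr : r₁ ≤ r₂) :
    μ.real (ball y r₂ \ ball y r₁) ≤ c₂ * (r₂ - r₁) := by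
  rw [measureReal_sdiff (ball_subset_ball hr) measurableSet_ball]
  calc μ.real (ball y r₂) - μ.real (ball y r₁)
      ≤ dist (μ.real (ball y r₂)) (μ.real (ball y r₁)) := Real.sub_le_dist _ _
    _ ≤ c₂ * dist r₂ r₁ := hμ.dist_le_mul r₂ r₁
    _ = c₂ * (r₂ - r₁) := by rw [Real.dist_eq, abs_of_nonneg (sub_nonneg.2 hr)]

lemma IsEqualMeasurePartition.card_crossingCells_ball_le [BoundedSpace M] [IsFiniteMeasure μ]
    (hP : IsEqualMeasurePartition μ P) {y : M}
    (hμ : LipschitzWith c₂ fun r => μ.real (ball y r)) {δ : ℝ} (hδ₀ : 0 ≤ δ)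
    (hδ : ∀ j, diam (P j) ≤ δ) (r : ℝ) :
    ((crossingCells P (ball y r)).card : ℝ) ≤ N * (2 * c₂ * δ) := by
  rw [hP.card_eq_mul_measureReal_biUnion]
  gcongr
  calc μ.real (⋃ j ∈ crossingCells P (ball y r), P j)
      ≤ μ.real (ball y (r + δ) \ ball y (r - δ)) :=
        measureReal_mono (iUnion_crossingCells_ball_subset hδ y r)
    _ ≤ c₂ * (r + δ - (r - δ)) := measureReal_ball_sdiff_ball_le hμ (by linarith)
    _ = 2 * c₂ * δ := by ring

lemma IsEqualMeasurePartition.exists_lpDiscrepancy_le_rpow [BoundedSpace M]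
    [SecondCountableTopology M] [IsProbabilityMeasure μ] {ξ : Measure ℝ} [IsProbabilityMeasure ξ]
    (hP : IsEqualMeasurePartition μ P) (hμ : ∀ y, LipschitzWith c₂ fun r => μ.real (ball y r))
    {d c₈ p : ℝ} (hN : 1 ≤ N) (hc₈ : 0 ≤ c₈) (hδ : ∀ j, diam (P j) ≤ c₈ * (N : ℝ) ^ (-1 / d))
    (hp : 0 < p) :
    ∃ D : Fin N → M, lpDiscrepancy μ ξ p D ≤ Real.exp (1 / 2) * √(2 * c₂ * c₈)
      * (p + 1) ^ ((1 : ℝ) / 2) * (N : ℝ) ^ (1 / 2 - 1 / (2 * d)) := by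
  have hN0 : (0 : ℝ) < N := Nat.cast_pos.2 hN
  obtain ⟨D, hD⟩ := hP.exists_lpDiscrepancy_le (ξ := ξ)
    (fun y r => hP.card_crossingCells_ball_le (hμ y) (by positivity) hδ r) hp
  have hN_rpow : √(N * (N : ℝ) ^ (-1 / d)) = (N : ℝ) ^ (1 / 2 - 1 / (2 * d)) := by
    calc √(N * (N : ℝ) ^ (-1 / d)) = ((N : ℝ) ^ (1 + -1 / d)) ^ ((1 : ℝ) / 2) := by
          rw [Real.rpow_add hN0, Real.rpow_one, Real.sqrt_eq_rpow]
      _ = (N : ℝ) ^ (1 / 2 - 1 / (2 * d)) := by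
          rw [← Real.rpow_mul hN0.le]
          ring_nf
  have hsqrt : √((p + 1) * (N * (2 * c₂ * (c₈ * (N : ℝ) ^ (-1 / d)))))
      = √(2 * c₂ * c₈) * √(p + 1) * √(N * (N : ℝ) ^ (-1 / d)) := by
    rw [← Real.sqrt_mul (by positivity), ← Real.sqrt_mul (by positivity)]
    ring_nf
  refine ⟨D, hD.trans_eq ?_⟩
  rw [hsqrt, hN_rpow, Real.sqrt_eq_rpow (p + 1)]
  ring

end Lipschitz

lemma vol_eq_measureReal_ball {M : Type*} [MetricSpace M] [MeasurableSpace M] {μ : Measure M}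
    [IsProbabilityMeasure μ] {y : M} (hvol : Continuous (vol μ y)) (r : ℝ) :
    vol μ y r = μ.real (ball y r) := by
  by_cases hr : 1 ≤ r
  · have hlim : Filter.Tendsto (vol μ y) (nhdsWithin 1 (Iio 1)) (nhds (vol μ y r)) := by
      simpa [ContinuousWithinAt, vol, hr] using hvol.continuousWithinAt (s := Iio 1) (x := 1)
    refine le_antisymm (le_of_tendsto hlim ?_) (by simp [vol, hr])
    filter_upwards [self_mem_nhdsWithin] with s hs
    rw [vol, if_neg (not_le.2 hs)]
    exact measureReal_mono (ball_subset_ball (hs.le.trans hr))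
  · rw [vol, if_neg hr, measureReal_def]

theorem stmt9_general {M : Type*} [PseudoMetricSpace M] [BoundedSpace M]
    [SecondCountableTopology M] [MeasurableSpace M] [OpensMeasurableSpace M] (μ : Measure M)
    [IsProbabilityMeasure μ] {d c₈ : ℝ} {c₂ : NNReal} (hd : 0 < d) (hc₈ : 0 ≤ c₈)
    (hμ : ∀ y, LipschitzWith c₂ fun r => μ.real (ball y r))
    (hpart : ∃ m₀ : ℕ, ∀ m : ℕ, m₀ ≤ m → ∃ P : Fin m → Set M,
      IsEqualMeasurePartition μ P ∧ ∀ j, diam (P j) ≤ c₈ * (m : ℝ) ^ (-1 / d)) :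
    ∃ c₃ : ℝ, 0 < c₃ ∧ ∀ N : ℕ, 1 ≤ N → ∀ p : ℝ, 0 < p →
      ∀ ξ : Measure ℝ, IsProbabilityMeasure ξ → ∃ D : Fin N → M,
        lpDiscrepancy μ ξ p D
          ≤ c₃ * (p + 1) ^ ((1 : ℝ) / 2) * (N : ℝ) ^ (1 / 2 - 1 / (2 * d)) := by
  obtain ⟨m₀, hpart⟩ := hpart
  set a := Real.exp (1 / 2) * √(2 * c₂ * c₈)
  set b := ((m₀ : ℝ) + 1) ^ (1 / 2 + 1 / (2 * d))
  have ha : 0 ≤ a := by positivity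
  have hb : 0 < b := by positivity
  refine ⟨a + b, by positivity, fun N hN p hp ξ _ => ?_⟩
  rcases le_or_gt m₀ N with hm₀ | hm₀
  · obtain ⟨P, hP, hdiam⟩ := hpart N hm₀
    obtain ⟨D, hD⟩ := hP.exists_lpDiscrepancy_le_rpow (ξ := ξ) hμ hN hc₈ hdiam hp
    refine ⟨D, hD.trans ?_⟩
    gcongr
    linarith
  · have : Nonempty M := nonempty_of_isProbabilityMeasure μ
    refine ⟨fun _ => Classical.arbitrary M, (lpDiscrepancy_le_natCast hp _).trans ?_⟩
    have hN0 : (0 : ℝ) < N := Nat.cast_pos.2 hN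
    have hN_le : (N : ℝ) ≤ m₀ + 1 := by exact_mod_cast hm₀.le.trans m₀.le_succ
    calc (N : ℝ) = (N : ℝ) ^ (1 / 2 + 1 / (2 * d)) * 1 * (N : ℝ) ^ (1 / 2 - 1 / (2 * d)) := by
          rw [mul_one, ← Real.rpow_add hN0]
          ring_nf
          rw [Real.rpow_one]
      _ ≤ (a + b) * (p + 1) ^ ((1 : ℝ) / 2) * (N : ℝ) ^ (1 / 2 - 1 / (2 * d)) := by
          gcongr
          · have : (N : ℝ) ^ (1 / 2 + 1 / (2 * d)) ≤ b :=
              Real.rpow_le_rpow hN0.le hN_le (by positivity)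
            linarith
          · exact Real.one_le_rpow (by linarith) (by norm_num)

/-- Theorem 1.1: in a compact connected metric measure space satisfying
Conditions A and B and admitting good equal-measure partitions, for every `N`, every
`0 < p < ∞`, and every Borel probability measure `ξ` on `[0,1]`, there exists an
`N`-point set whose `L_p`-discrepancy is at most `c₃ (p+1)^{1/2} N^{1/2 - 1/(2d)}`. -/
theorem stmt9 {M : Type*} [MetricSpace M] [CompactSpace M] [ConnectedSpace M] [Nonempty M]
    [MeasurableSpace M] [BorelSpace M] (μ : Measure M) [IsProbabilityMeasure μ]
    (hdiam : Metric.diam (Set.univ : Set M) = 1)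
    (d c₁ c₂ c₈ : ℝ) (hd : 0 < d) (hc₁ : 0 < c₁) (hc₂ : 0 < c₂) (hc₈ : 0 < c₈)
    (hA : ∀ y : M, ∀ r ∈ Set.Icc (0:ℝ) 1,
      c₁⁻¹ * r ^ d ≤ vol μ y r ∧ vol μ y r ≤ c₁ * r ^ d)
    (hB : ∀ y : M, ∀ r₁ r₂ : ℝ, |vol μ y r₁ - vol μ y r₂| ≤ c₂ * |r₁ - r₂|)
    (hpart : ∃ m₀ : ℕ, ∀ m : ℕ, m₀ ≤ m → ∃ P : Fin m → Set M,
      (∀ j, MeasurableSet (P j)) ∧ Pairwise (Function.onFun Disjoint P) ∧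
      (⋃ j, P j) = Set.univ ∧ (∀ j, μ (P j) = 1 / m) ∧
      (∀ j, Metric.diam (P j) ≤ c₈ * (m : ℝ) ^ (-(1:ℝ)/d))) :
    ∃ c₃ : ℝ, 0 < c₃ ∧ ∀ N : ℕ, 1 ≤ N → ∀ p : ℝ, 0 < p →
      ∀ ξ : Measure ℝ, IsProbabilityMeasure ξ → ξ (Set.Icc (0:ℝ) 1)ᶜ = 0 →
      ∃ D : Fin N → M,
        (∫ y, (∫ r, |(∑ i : Fin N, (Metric.ball y r).indicator 1 (D i) : ℝ)
            - N * vol μ y r| ^ p ∂ξ) ∂μ) ^ (1/p)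
          ≤ c₃ * (p + 1) ^ ((1:ℝ)/2) * (N : ℝ) ^ (1/2 - 1/(2*d)) := by
  have hlip y : LipschitzWith ⟨c₂, hc₂.le⟩ (vol μ y) := .of_dist_le_mul (hB y)
  have hvol y r : vol μ y r = μ.real (ball y r) := vol_eq_measureReal_ball (hlip y).continuous r
  obtain ⟨c₃, hc₃, h⟩ := stmt9_general μ hd hc₈.le (fun y => funext (hvol y) ▸ hlip y)
    (hpart.imp fun _ h m hm => (h m hm).imp fun _ ⟨hmeas, hdisj, hU, hμ, hδ⟩ =>
      ⟨⟨hmeas, hdisj, hU, hμ⟩, hδ⟩)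
  simp only [hvol]
  exact ⟨c₃, hc₃, fun N hN p hp ξ hξ _ => h N hN p hp ξ hξ⟩
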